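/- arXiv:math/9504219 — 2 statements merged into one kernel-verified Lean document; each statement's English description precedes it below -/
import Mathlib

section
/- At x = 0, i^n q^{n^2/4} \psi_n(-i, 0) equals (q; q^2)_{n/2}^2 if n is even and 0 if n is odd; consequently E_q(0; -i, b/2) = \sum_{n=0}^{\infty} ((q;q^2)_n/(q^2;q^2)_n)(-b^2/4)^n = (-q b^2/4; q^2)_\infty/(-b^2/4; q^2)_\infty. -/
/-!
At `x = 0` the two factors of `ψ_n(a, 0)` pair up to `(-a²q^{1-n}; q²)_n`. For `a = -i` and `n` odd
this contains the factor `1 - q⁰`; for `n = 2m` its lower half reflects onto its upper half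
`(q; q²)_m`. Only the even terms of the q-exponential survive, and since
`(q; q)_{2m} = (q; q²)_m (q²; q²)_m` they form a q-binomial series in base `q²`. A q-binomial series
is summed by iterating its functional equation `(1 - z) F(z) = (1 - a z) F(q z)` and letting
`q^N z → 0`.
-/

open Finset Complex

/-- The q-shifted factorial `(c;q)_n`. -/
noncomputable def qpg (c q : ℂ) (n : ℕ) : ℂ := ∏ k ∈ range n, (1 - c * q ^ k)

/-- `(q;q)_n`. -/
noncomputable def qp (q : ℂ) (n : ℕ) : ℂ := ∏ k ∈ range n, (1 - q ^ (k + 1))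

/-- `ψ_n(a, x)` with `x = (z + z⁻¹)/2` and `q = s⁴`. -/
noncomputable def psi4 (a s : ℂ) (n : ℕ) (z : ℂ) : ℂ :=
  qpg (a * s ^ (2 - 2 * (n : ℤ)) * z) (s ^ 4) n *
    qpg (a * s ^ (2 - 2 * (n : ℤ)) * z⁻¹) (s ^ 4) n

/-- The q-exponential `E_q(x; a, b)`, `q = s⁴`. -/
noncomputable def qExpE (a b s z : ℂ) : ℂ :=
  ∑' n : ℕ, s ^ (n ^ 2) * psi4 a s n z * b ^ n / qp (s ^ 4) n

open Filter Topology

section FiniteProducts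

lemma qp_eq_qpg (q : ℂ) (n : ℕ) : qp q n = qpg q q n :=
  prod_congr rfl fun k _ => by rw [pow_succ']

lemma qpg_succ (c q : ℂ) (n : ℕ) : qpg c q (n + 1) = qpg c q n * (1 - c * q ^ n) :=
  prod_range_succ _ n

lemma qpg_add (c q : ℂ) (m n : ℕ) : qpg c q (m + n) = qpg c q m * qpg (c * q ^ m) q n := by
  simp only [qpg, prod_range_add, pow_add, mul_assoc]

lemma qpg_two_mul (c q : ℂ) (m : ℕ) :
    qpg c q (2 * m) = qpg c (q ^ 2) m * qpg (c * q) (q ^ 2) m := by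
  induction m with
  | zero => simp [qpg]
  | succ m ih =>
    rw [show 2 * (m + 1) = 2 * m + 1 + 1 by ring, qpg_succ, qpg_succ, ih, qpg_succ, qpg_succ]
    ring

lemma qp_two_mul (q : ℂ) (m : ℕ) : qp q (2 * m) = qpg q (q ^ 2) m * qp (q ^ 2) m := by
  rw [qp_eq_qpg, qp_eq_qpg, qpg_two_mul, ← sq]

lemma qpg_sq_eq_prod (q : ℂ) (n : ℕ) :
    qpg q (q ^ 2) n = ∏ j ∈ range n, (1 - q ^ (1 + 2 * j)) :=
  prod_congr rfl fun j _ => by rw [pow_add, pow_one, pow_mul]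

lemma qp_sq_eq_prod (q : ℂ) (n : ℕ) :
    qp (q ^ 2) n = ∏ j ∈ range n, (1 - q ^ (2 + 2 * j)) :=
  prod_congr rfl fun j _ => by rw [← pow_mul]; ring_nf

lemma qpg_mul_qpg_neg (c q : ℂ) (n : ℕ) : qpg c q n * qpg (-c) q n = qpg (c ^ 2) (q ^ 2) n := by
  rw [qpg, qpg, qpg, ← prod_mul_distrib]
  exact prod_congr rfl fun k _ => by ring

lemma qpg_eq_zero {c q : ℂ} {k n : ℕ} (hk : k < n) (h : c * q ^ k = 1) : qpg c q n = 0 :=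
  prod_eq_zero (mem_range.2 hk) (by rw [h, sub_self])

lemma qpg_reflect {c q : ℂ} (hc : c ≠ 0) (hq : q ≠ 0) (m : ℕ) :
    (-c) ^ m * q ^ (∑ k ∈ range m, k) * qpg (c⁻¹ * q ^ (1 - (m : ℤ))) q m = qpg c q m := by
  have hprefactor : (-c) ^ m * q ^ (∑ k ∈ range m, k) = ∏ k ∈ range m, -c * q ^ k := by
    rw [prod_mul_distrib, prod_const, card_range, prod_pow_eq_pow_sum]
  rw [hprefactor, qpg, ← prod_range_reflect (fun k => 1 - c⁻¹ * q ^ (1 - (m : ℤ)) * q ^ k),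
    ← prod_mul_distrib]
  refine prod_congr rfl fun k hk => ?_
  have hexp : q ^ (1 - (m : ℤ)) * q ^ (m - 1 - k) = (q ^ k)⁻¹ := by
    have hkm := mem_range.1 hk
    rw [← zpow_natCast, ← zpow_natCast, ← zpow_add₀ hq, ← zpow_neg]
    congr 1
    omega
  calc -c * q ^ k * (1 - c⁻¹ * q ^ (1 - (m : ℤ)) * q ^ (m - 1 - k))
      = -c * q ^ k * (1 - c⁻¹ * (q ^ k)⁻¹) := by rw [mul_assoc c⁻¹, hexp]
    _ = 1 - c * q ^ k := by field_simp; ring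

lemma qpg_sq_base_reflect {q : ℂ} (hq : q ≠ 0) (m : ℕ) :
    (-1) ^ m * q ^ m ^ 2 * qpg (q ^ (1 - 2 * (m : ℤ))) (q ^ 2) m = qpg q (q ^ 2) m := by
  have hpow : (-q) ^ m * (q ^ 2) ^ (∑ k ∈ range m, k) = (-1) ^ m * q ^ m ^ 2 := by
    have hexp : m + 2 * ∑ k ∈ range m, k = m ^ 2 := by
      rw [mul_comm 2, sum_range_id_mul_two]
      cases m with
      | zero => rfl
      | succ m => rw [Nat.add_sub_cancel]; ring
    rw [neg_pow, ← pow_mul, mul_assoc, ← pow_add, hexp]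
  have hbase : q⁻¹ * (q ^ 2) ^ (1 - (m : ℤ)) = q ^ (1 - 2 * (m : ℤ)) := by
    rw [← zpow_neg_one, ← zpow_natCast, ← zpow_mul, ← zpow_add₀ hq]
    congr 1
    push_cast
    ring
  rw [← qpg_reflect hq (pow_ne_zero 2 hq), hpow, hbase]

lemma one_sub_mul_pow_ne_zero {c q : ℂ} (hc : ‖c‖ < 1) (hq : ‖q‖ ≤ 1) (k : ℕ) :
    1 - c * q ^ k ≠ 0 := by
  have hlt : ‖c * q ^ k‖ < 1 := by
    rw [norm_mul, norm_pow]
    exact (mul_le_of_le_one_right (norm_nonneg c) (pow_le_one₀ (norm_nonneg q) hq)).trans_lt hc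
  exact sub_ne_zero.2 fun h => by simp [← h] at hlt

lemma qpg_ne_zero {c q : ℂ} (hc : ‖c‖ < 1) (hq : ‖q‖ ≤ 1) (n : ℕ) : qpg c q n ≠ 0 :=
  prod_ne_zero_iff.2 fun k _ => one_sub_mul_pow_ne_zero hc hq k

end FiniteProducts

section InfiniteProduct

/-- The infinite q-shifted factorial `(c;q)_∞`, meaningful for `‖q‖ < 1`. -/
noncomputable def qpgInf (c q : ℂ) : ℂ := ∏' k : ℕ, (1 - c * q ^ k)

lemma qpgInf_neg_sq (c q : ℂ) : qpgInf (-c) (q ^ 2) = ∏' k : ℕ, (1 + c * q ^ (2 * k)) := by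
  simp only [qpgInf, neg_mul, sub_neg_eq_add, pow_mul]

variable {q : ℂ}

lemma summable_norm_neg_mul_pow (hq : ‖q‖ < 1) (c : ℂ) : Summable fun k : ℕ => ‖-(c * q ^ k)‖ := by
  simpa only [norm_neg, norm_mul, norm_pow] using
    (summable_geometric_of_lt_one (norm_nonneg q) hq).mul_left ‖c‖

lemma tendsto_qpg (hq : ‖q‖ < 1) (c : ℂ) : Tendsto (qpg c q) atTop (𝓝 (qpgInf c q)) := by
  have h := multipliable_one_add_of_summable (summable_norm_neg_mul_pow hq c)
  simp only [← sub_eq_add_neg] at h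
  exact h.tendsto_prod_tprod_nat

lemma qpgInf_ne_zero (hq : ‖q‖ < 1) {c : ℂ} (hc : ∀ k, 1 - c * q ^ k ≠ 0) : qpgInf c q ≠ 0 := by
  simp only [qpgInf, sub_eq_add_neg] at hc ⊢
  exact tprod_one_add_ne_zero_of_summable hc (summable_norm_neg_mul_pow hq c)

end InfiniteProduct

section QBinomial

/-- The q-binomial series `₁φ₀(a; –; q, z) = ∑ₙ (a;q)ₙ / (q;q)ₙ zⁿ`, meaningful for
`‖q‖ < 1` and `‖z‖ < 1`. -/
noncomputable def qBinomialSeries (a q z : ℂ) : ℂ := ∑' n : ℕ, qpg a q n / qp q n * z ^ n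

lemma qpg_div_qp_succ (a q : ℂ) (n : ℕ) :
    qpg a q (n + 1) / qp q (n + 1) = qpg a q n / qp q n * ((1 - a * q ^ n) / (1 - q * q ^ n)) := by
  rw [qp_eq_qpg, qp_eq_qpg, qpg_succ, qpg_succ, mul_div_mul_comm]

lemma qBinomialSeries_zero (a q : ℂ) : qBinomialSeries a q 0 = 1 := by
  rw [qBinomialSeries, tsum_eq_single 0 fun n hn => by simp [hn]]
  simp [qpg, qp]

variable {q : ℂ}

lemma summable_qBinomialSeries (hq : ‖q‖ < 1) (a : ℂ) {z : ℂ} (hz : ‖z‖ < 1) :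
    Summable fun n : ℕ => qpg a q n / qp q n * z ^ n := by
  obtain ⟨r, hzr, hr⟩ := exists_between hz
  have hone (c : ℂ) : Tendsto (fun n : ℕ => 1 - c * q ^ n) atTop (𝓝 1) := by
    simpa using ((tendsto_pow_atTop_nhds_zero_of_norm_lt_one hq).const_mul c).const_sub 1
  have hratio : Tendsto (fun n : ℕ => ‖(1 - a * q ^ n) / (1 - q * q ^ n) * z‖) atTop (𝓝 ‖z‖) := by
    simpa using (((hone a).div (hone q) one_ne_zero).mul_const z).norm
  refine summable_of_ratio_norm_eventually_le hr ?_
  filter_upwards [hratio.eventually_le_const hzr] with n hn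
  calc ‖qpg a q (n + 1) / qp q (n + 1) * z ^ (n + 1)‖
      = ‖(1 - a * q ^ n) / (1 - q * q ^ n) * z‖ * ‖qpg a q n / qp q n * z ^ n‖ := by
        rw [qpg_div_qp_succ, ← norm_mul, pow_succ]
        ring_nf
    _ ≤ r * ‖qpg a q n / qp q n * z ^ n‖ := by gcongr

lemma continuousAt_qBinomialSeries_zero (hq : ‖q‖ < 1) (a : ℂ) :
    ContinuousAt (qBinomialSeries a q) 0 := by
  have hhalf : ‖(1 / 2 : ℂ)‖ < 1 := by norm_num
  refine tendsto_tsum_of_dominated_convergence (summable_qBinomialSeries hq a hhalf).norm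
    (fun n => (by fun_prop : Continuous fun z : ℂ => qpg a q n / qp q n * z ^ n).tendsto 0) ?_
  have hhalf₀ : 0 < ‖(1 / 2 : ℂ)‖ := by norm_num
  filter_upwards [Metric.closedBall_mem_nhds (0 : ℂ) hhalf₀] with z hz n
  rw [mem_closedBall_zero_iff] at hz
  rw [norm_mul, norm_mul, norm_pow, norm_pow]
  gcongr

lemma one_sub_mul_qBinomialSeries (hq : ‖q‖ < 1) (a : ℂ) {z : ℂ}
    (hz : ‖z‖ < 1) :
    (1 - z) * qBinomialSeries a q z = (1 - a * z) * qBinomialSeries a q (z * q) := by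
  have hzq : ‖z * q‖ < 1 := by
    rw [norm_mul]
    exact mul_lt_one_of_nonneg_of_lt_one_left (norm_nonneg z) hz hq.le
  set c : ℕ → ℂ := fun n => qpg a q n / qp q n with hc
  have hsum : Summable fun n => c n * z ^ n := summable_qBinomialSeries hq a hz
  have hsumq : Summable fun n => c n * (z * q) ^ n := summable_qBinomialSeries hq a hzq
  have hterm (n : ℕ) : c (n + 1) * z ^ (n + 1) - c (n + 1) * (z * q) ^ (n + 1)
      = z * (c n * z ^ n) - a * z * (c n * (z * q) ^ n) := by
    have hne := one_sub_mul_pow_ne_zero hq hq.le n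
    have hcoeff : c (n + 1) * (1 - q * q ^ n) = c n * (1 - a * q ^ n) := by
      simp only [hc, qpg_div_qp_succ]
      rw [mul_assoc, div_mul_cancel₀ _ hne]
    linear_combination z ^ (n + 1) * hcoeff
  have hdiff := tsum_congr (L := .unconditional ℕ) hterm
  rw [((summable_nat_add_iff 1).2 hsum).tsum_sub ((summable_nat_add_iff 1).2 hsumq),
    (hsum.mul_left z).tsum_sub (hsumq.mul_left (a * z)), tsum_mul_left, tsum_mul_left] at hdiff
  have hz₀ := hsum.tsum_eq_zero_add
  have hzq₀ := hsumq.tsum_eq_zero_add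
  simp only [pow_zero] at hz₀ hzq₀
  change (1 - z) * ∑' n, c n * z ^ n = (1 - a * z) * ∑' n, c n * (z * q) ^ n
  linear_combination hdiff + hz₀ - hzq₀

lemma qpg_mul_qBinomialSeries (hq : ‖q‖ < 1) (a : ℂ) {z : ℂ} (hz : ‖z‖ < 1)
    (n : ℕ) :
    qpg z q n * qBinomialSeries a q z = qpg (a * z) q n * qBinomialSeries a q (z * q ^ n) := by
  induction n with
  | zero => simp [qpg]
  | succ n ih =>
    have hzq : ‖z * q ^ n‖ < 1 := by
      rw [norm_mul, norm_pow]
      exact mul_lt_one_of_nonneg_of_lt_one_left (norm_nonneg z) hz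
        (pow_le_one₀ (norm_nonneg q) hq.le)
    have hstep := one_sub_mul_qBinomialSeries hq a hzq
    rw [mul_assoc z, ← pow_succ] at hstep
    rw [qpg_succ, qpg_succ]
    linear_combination (1 - z * q ^ n) * ih + qpg (a * z) q n * hstep

theorem qBinomialSeries_eq_div (hq : ‖q‖ < 1) (a : ℂ) {z : ℂ} (hz : ‖z‖ < 1) :
    qBinomialSeries a q z = qpgInf (a * z) q / qpgInf z q := by
  have hz₀ : Tendsto (fun n : ℕ => z * q ^ n) atTop (𝓝 0) := by
    simpa using (tendsto_pow_atTop_nhds_zero_of_norm_lt_one hq).const_mul z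
  have hone : Tendsto (fun n : ℕ => qBinomialSeries a q (z * q ^ n)) atTop (𝓝 1) := by
    rw [← qBinomialSeries_zero a q]
    exact (continuousAt_qBinomialSeries_zero hq a).tendsto.comp hz₀
  rw [eq_div_iff (qpgInf_ne_zero hq (one_sub_mul_pow_ne_zero hz hq.le)), mul_comm,
    ← mul_one (qpgInf (a * z) q)]
  refine tendsto_nhds_unique ((tendsto_qpg hq z).mul_const _) ?_
  simpa only [qpg_mul_qBinomialSeries hq a hz] using (tendsto_qpg hq (a * z)).mul hone

end QBinomial

section AtZero

lemma psi4_I (a s : ℂ) (n : ℕ) :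
    psi4 a s n I = qpg (-a ^ 2 * (s ^ 4) ^ (1 - (n : ℤ))) ((s ^ 4) ^ 2) n := by
  have hexp : (s ^ (2 - 2 * (n : ℤ))) ^ 2 = (s ^ 4) ^ (1 - (n : ℤ)) := by
    rw [← zpow_natCast, ← zpow_natCast, ← zpow_mul, ← zpow_mul]
    congr 1
    push_cast
    ring
  rw [psi4, inv_I, mul_neg, qpg_mul_qpg_neg, mul_pow, mul_pow, hexp, I_sq]
  congr 1
  ring

lemma psi4_neg_I_I (s : ℂ) (n : ℕ) :
    psi4 (-I) s n I = qpg ((s ^ 4) ^ (1 - (n : ℤ))) ((s ^ 4) ^ 2) n := by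
  rw [psi4_I, neg_sq, I_sq, neg_neg, one_mul]

lemma psi4_neg_I_I_odd {s : ℂ} (hs : s ≠ 0) (m : ℕ) : psi4 (-I) s (2 * m + 1) I = 0 := by
  rw [psi4_neg_I_I]
  refine qpg_eq_zero (k := m) (by omega) ?_
  rw [← pow_mul, ← zpow_natCast _ (2 * m), ← zpow_add₀ (pow_ne_zero 4 hs)]
  simp

lemma psi4_neg_I_I_even {s : ℂ} (hs : s ≠ 0) (m : ℕ) :
    s ^ (2 * m) ^ 2 * psi4 (-I) s (2 * m) I = (-1) ^ m * qpg (s ^ 4) ((s ^ 4) ^ 2) m ^ 2 := by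
  have hs4 : s ^ (2 * m) ^ 2 = (s ^ 4) ^ m ^ 2 := by rw [← pow_mul]; ring
  have hq : s ^ 4 ≠ 0 := pow_ne_zero 4 hs
  rw [psi4_neg_I_I, hs4]
  generalize s ^ 4 = q at hq ⊢
  have hupper : q ^ (1 - 2 * (m : ℤ)) * (q ^ 2) ^ m = q := by
    rw [← pow_mul, ← zpow_natCast, ← zpow_add₀ hq]
    simp
  have hsign : ((-1 : ℂ) ^ m) * (-1) ^ m = 1 := by rw [← mul_pow]; simp
  push_cast
  rw [two_mul m, qpg_add, hupper]
  linear_combination (-1) ^ m * qpg q (q ^ 2) m * qpg_sq_base_reflect hq m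
    - q ^ m ^ 2 * qpg (q ^ (1 - 2 * (m : ℤ))) (q ^ 2) m * qpg q (q ^ 2) m * hsign

lemma I_pow_mul_psi4_neg_I_I {s : ℂ} (hs : s ≠ 0) (n : ℕ) :
    I ^ n * s ^ n ^ 2 * psi4 (-I) s n I =
      if n % 2 = 0 then qpg (s ^ 4) ((s ^ 4) ^ 2) (n / 2) ^ 2 else 0 := by
  rcases Nat.even_or_odd' n with ⟨m, rfl | rfl⟩
  · rw [mul_assoc, psi4_neg_I_I_even hs, pow_mul, I_sq, ← mul_assoc, ← mul_pow]
    simp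
  · rw [psi4_neg_I_I_odd hs, if_neg (by omega), mul_zero]

lemma qExpE_neg_I_I {s : ℂ} (hs : s ≠ 0) (hs1 : ‖s ^ 4‖ < 1) (b : ℂ) :
    qExpE (-I) b s I = qBinomialSeries (s ^ 4) ((s ^ 4) ^ 2) (-b ^ 2) := by
  have hinj : Function.Injective fun m : ℕ => 2 * m := mul_right_injective₀ two_ne_zero
  have hbase : ‖(s ^ 4) ^ 2‖ ≤ 1 := by
    rw [norm_pow]
    exact pow_le_one₀ (norm_nonneg _) hs1.le
  rw [qExpE, qBinomialSeries, ← hinj.tsum_eq]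
  · refine tsum_congr fun m => ?_
    rw [psi4_neg_I_I_even hs, qp_two_mul, neg_pow (b ^ 2), ← pow_mul b]
    field_simp [qpg_ne_zero hs1 hbase m]
  · intro n hn
    rcases Nat.even_or_odd' n with ⟨m, rfl | rfl⟩
    · exact ⟨m, rfl⟩
    · exact absurd (by simp [psi4_neg_I_I_odd hs]) hn

end AtZero

theorem qExpE_at_zero_general (q s : ℂ) (hs : s ≠ 0) (hsq : s ^ 4 = q) (hq : ‖q‖ < 1)
    (b : ℂ) (hb : ‖b‖ < 2) :
    (∀ n : ℕ, I ^ n * s ^ (n ^ 2) * psi4 (-I) s n I =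
        if n % 2 = 0 then (∏ j ∈ range (n / 2), (1 - q ^ (1 + 2 * j))) ^ 2 else 0) ∧
      qExpE (-I) (b / 2) s I =
        ∑' n : ℕ, (∏ j ∈ range n, (1 - q ^ (1 + 2 * j))) /
            (∏ j ∈ range n, (1 - q ^ (2 + 2 * j))) * (-(b ^ 2 / 4)) ^ n ∧
      qExpE (-I) (b / 2) s I =
        (∏' k : ℕ, (1 + q * b ^ 2 / 4 * q ^ (2 * k))) /
          ∏' k : ℕ, (1 + b ^ 2 / 4 * q ^ (2 * k)) := by
  subst hsq
  have hseries : qExpE (-I) (b / 2) s I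
      = qBinomialSeries (s ^ 4) ((s ^ 4) ^ 2) (-(b ^ 2 / 4)) := by
    rw [qExpE_neg_I_I hs hq, div_pow]
    norm_num
  have hz : ‖-(b ^ 2 / 4)‖ < 1 := by
    rw [norm_neg, norm_div, norm_pow, RCLike.norm_ofNat]
    nlinarith [norm_nonneg b]
  have hq2 : ‖(s ^ 4) ^ 2‖ < 1 := by
    rw [norm_pow]
    exact pow_lt_one₀ (norm_nonneg _) hq two_ne_zero
  refine ⟨fun n => ?_, ?_, ?_⟩
  · rw [I_pow_mul_psi4_neg_I_I hs, qpg_sq_eq_prod]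
  · simp only [hseries, qBinomialSeries, qpg_sq_eq_prod, qp_sq_eq_prod]
  · rw [hseries, qBinomialSeries_eq_div hq2 _ hz, mul_neg, qpgInf_neg_sq, qpgInf_neg_sq,
      mul_div_assoc]

/-- At `x = 0` (i.e. `z = i`): `iⁿ q^{n²/4} ψ_n(-i,0)` equals `(q;q²)_{n/2}²` for `n`
even and `0` for `n` odd; consequently
`E_q(0; -i, b/2) = ∑ₙ ((q;q²)ₙ/(q²;q²)ₙ)(-b²/4)ⁿ = (-qb²/4;q²)_∞/(-b²/4;q²)_∞`.
Here `q = s⁴`. -/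
theorem qExpE_at_zero (q s : ℝ) (hq0 : 0 < q) (hq1 : q < 1) (hs : 0 < s)
    (hsq : s ^ 4 = q) (b : ℂ) (hb : ‖b‖ < 2) :
    (∀ n : ℕ, I ^ n * (s : ℂ) ^ (n ^ 2) * psi4 (-I) (s : ℂ) n I =
        if n % 2 = 0 then (∏ j ∈ range (n / 2), (1 - (q : ℂ) ^ (1 + 2 * j))) ^ 2 else 0) ∧
      qExpE (-I) (b / 2) (s : ℂ) I =
        ∑' n : ℕ, (∏ j ∈ range n, (1 - (q : ℂ) ^ (1 + 2 * j))) /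
            (∏ j ∈ range n, (1 - (q : ℂ) ^ (2 + 2 * j))) * (-(b ^ 2 / 4)) ^ n ∧
      qExpE (-I) (b / 2) (s : ℂ) I =
        (∏' k : ℕ, (1 + (q : ℂ) * b ^ 2 / 4 * (q : ℂ) ^ (2 * k))) /
          ∏' k : ℕ, (1 + b ^ 2 / 4 * (q : ℂ) ^ (2 * k)) := by
  exact qExpE_at_zero_general q s (by exact_mod_cast hs.ne') (by exact_mod_cast hsq)
    (by rwa [norm_real, Real.norm_of_nonneg hq0.le]) b hb
end

section
/- Generating relation for continuous q-Hermite polynomials: (-b^2/4; q^2)_\infty \, E_q(x; -i, b/2) = \sum_{k=0}^{\infty} (q^{k^2/4}/(q;q)_k)(ib/2)^k H_k(x|q). -/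
open Finset Complex

/-- The continuous q-Hermite polynomial `H_k(x|q)` as a Laurent polynomial in
`z = e^{iθ}`, `x = (z + z⁻¹)/2`. -/
noncomputable def Hq (q : ℂ) (n : ℕ) (z : ℂ) : ℂ :=
  ∑ k ∈ range (n + 1), qp q n / (qp q k * qp q (n - k)) * z ^ ((n : ℤ) - 2 * k)

/-!
Write `q = s⁴`, `X = b / 2` and `y = z + z⁻¹`, and regard both sides as formal power series in `X`.
The two-step recurrence of `ψ_n(-i, x)` is a second-order `q`-difference equation for the series of
`E_q(x; -i, X)`. On the other side, `∑ H_n(x|q) Xⁿ / (q;q)_n = 1 / ((zX;q)_∞ (z⁻¹X;q)_∞)` satisfies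
a first-order equation, which the factors `s^(n²) iⁿ` turn into an equation relating the arguments
`X`, `s²X` and `s⁴X`. Eliminating the half steps from it gives a second-order `q`-difference
equation again, the one obtained from that of `E_q` by multiplying with `(-X²; q²)_∞`. At degree `n`
its leading factor is `q (1 - q^(n-1)) (1 - q^n)`, nonzero for `n ≥ 2`, so two solutions that agree
in degrees `0` and `1` are equal.
-/

section

open PowerSeries

section Algebra

variable {R : Type*}

lemma coeff_mul_of_forall_coeff_eq_zero [Semiring R] {A F : R⟦X⟧} {n : ℕ}
    (hF : ∀ m < n, coeff m F = 0) :
    coeff n (A * F) = constantCoeff A * coeff n F := by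
  rw [coeff_mul, sum_eq_single (0, n), coeff_zero_eq_constantCoeff_apply]
  · rintro ⟨i, j⟩ hij hne
    rw [HasAntidiagonal.mem_antidiagonal] at hij
    have hi : i ≠ 0 := fun hi => hne (Prod.ext hi (by simpa [hi] using hij))
    rw [hF j (by simp only at hij; omega), mul_zero]
  · simp

lemma eq_zero_of_qDifference_eq [CommSemiring R] [NoZeroDivisors R] {q : R}
    {A₀ A₁ A₂ F : R⟦X⟧} {N : ℕ}
    (hF : A₀ * F + A₁ * rescale q F + A₂ * rescale (q ^ 2) F = 0)
    (hindicial : ∀ n ≥ N, constantCoeff A₀ + constantCoeff A₁ * q ^ n +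
      constantCoeff A₂ * (q ^ 2) ^ n ≠ 0)
    (hinit : ∀ n < N, coeff n F = 0) : F = 0 := by
  ext n
  induction n using Nat.strong_induction_on with
  | _ n ih =>
    obtain hn | hn := lt_or_ge n N
    · exact hinit n hn
    · have hlow (a : R) : ∀ m < n, coeff m (rescale a F) = 0 := fun m hm => by
        rw [coeff_rescale, ih m hm, map_zero, mul_zero]
      have hcoeff := congrArg (coeff n) hF
      rw [map_add, map_add, coeff_mul_of_forall_coeff_eq_zero ih,
        coeff_mul_of_forall_coeff_eq_zero (hlow q),
        coeff_mul_of_forall_coeff_eq_zero (hlow (q ^ 2)), coeff_rescale, coeff_rescale,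
        map_zero] at hcoeff
      rw [map_zero]
      refine (mul_eq_zero.mp (Eq.trans ?_ hcoeff)).resolve_left (hindicial n hn)
      ring

lemma rescale_C [CommSemiring R] (a r : R) : rescale a (C r) = C r := by
  ext n
  rcases n with _ | n <;> simp [coeff_C]

lemma rescale_sq [CommSemiring R] (a : R) (F : R⟦X⟧) :
    rescale (a ^ 2) F = rescale a (rescale a F) := by
  rw [rescale_rescale, sq]

lemma rescale_expand [CommRing R] (a : R) {k : ℕ} (hk : k ≠ 0) (F : R⟦X⟧) :
    rescale a (expand k hk F) = expand k hk (rescale (a ^ k) F) := by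
  ext n
  by_cases h : k ∣ n
  · obtain ⟨m, rfl⟩ := h
    simp [coeff_expand_mul, pow_mul]
  · simp [coeff_expand_of_not_dvd, h]

end Algebra

section Evaluation

variable {𝕜 : Type*} [RCLike 𝕜]

lemma hasSum_coeff_mul {F G : 𝕜⟦X⟧} {x a b : 𝕜}
    (hF : HasSum (fun n => coeff n F * x ^ n) a) (hG : HasSum (fun n => coeff n G * x ^ n) b) :
    HasSum (fun n => coeff n (F * G) * x ^ n) (a * b) := by
  have hcauchy (n : ℕ) : ∑ ij ∈ antidiagonal n, coeff ij.1 F * x ^ ij.1 * (coeff ij.2 G * x ^ ij.2)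
      = coeff n (F * G) * x ^ n := by
    rw [coeff_mul, sum_mul]
    refine sum_congr rfl fun ij hij => ?_
    rw [← HasAntidiagonal.mem_antidiagonal.mp hij]
    ring
  have hsum := summable_norm_sum_mul_antidiagonal_of_summable_norm hF.summable.norm
    hG.summable.norm
  have htsum := tsum_mul_tsum_eq_tsum_sum_antidiagonal_of_summable_norm hF.summable.norm
    hG.summable.norm
  rw [hF.tsum_eq, hG.tsum_eq] at htsum
  rw [htsum]
  simpa only [hcauchy] using hsum.of_norm.hasSum

lemma hasSum_coeff_expand {R : Type*} [CommRing R] [TopologicalSpace R] {F : R⟦X⟧} {x a : R}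
    {k : ℕ} (hk : k ≠ 0)
    (hF : HasSum (fun n => coeff n F * (x ^ k) ^ n) a) :
    HasSum (fun n => coeff n (expand k hk F) * x ^ n) a := by
  rw [← (mul_right_injective₀ hk).hasSum_iff]
  · simpa [Function.comp_def, coeff_expand_mul, pow_mul] using hF
  · intro n hn
    rw [coeff_expand_of_not_dvd, zero_mul]
    exact fun ⟨m, hm⟩ => hn ⟨m, hm.symm⟩

lemma tendsto_tsum_coeff_mul_pow {F : 𝕜⟦X⟧} {p x : 𝕜} (hp : ‖p‖ < 1)
    (hF : Summable fun m => coeff m F * x ^ m) :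
    Filter.Tendsto (fun n : ℕ => ∑' m, coeff m F * (p ^ n * x) ^ m) Filter.atTop
      (nhds (constantCoeff F)) := by
  have hlim : ∑' m, coeff m F * (0 : 𝕜) ^ m = constantCoeff F := by
    rw [tsum_eq_single 0 fun m hm => by simp [hm]]
    simp
  rw [← hlim]
  refine tendsto_tsum_of_dominated_convergence hF.norm (fun m => ?_) (.of_forall fun n m => ?_)
  · have hpx : Filter.Tendsto (fun n : ℕ => p ^ n * x) Filter.atTop (nhds 0) := by
      simpa using (tendsto_pow_atTop_nhds_zero_of_norm_lt_one hp).mul_const x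
    exact (hpx.pow m).const_mul _
  · rw [norm_mul, norm_mul, norm_pow, norm_pow, norm_mul, norm_pow]
    gcongr
    exact mul_le_of_le_one_left (norm_nonneg x) (pow_le_one₀ (norm_nonneg p) hp.le)

end Evaluation

section QExponentials

variable {q : ℂ}

lemma qp_zero (q : ℂ) : qp q 0 = 1 := by simp [qp]

lemma qp_succ (q : ℂ) (n : ℕ) : qp q (n + 1) = qp q n * (1 - q ^ (n + 1)) :=
  prod_range_succ _ n

lemma one_sub_pow_succ_ne_zero (hq : ¬IsOfFinOrder q) (n : ℕ) : 1 - q ^ (n + 1) ≠ 0 :=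
  fun h => hq (isOfFinOrder_iff_pow_eq_one.mpr ⟨n + 1, n.succ_pos, (sub_eq_zero.mp h).symm⟩)

lemma qp_ne_zero (hq : ¬IsOfFinOrder q) (n : ℕ) : qp q n ≠ 0 :=
  prod_ne_zero_iff.mpr fun k _ => one_sub_pow_succ_ne_zero hq k

lemma not_isOfFinOrder_of_norm_lt_one (hq : ‖q‖ < 1) : ¬IsOfFinOrder q :=
  fun h => hq.ne h.norm_eq_one

/-- Jackson's small `q`-exponential `∑ Xⁿ / (q;q)ₙ = 1 / (X;q)_∞`. -/
noncomputable def smallQExp (q : ℂ) : ℂ⟦X⟧ := mk fun n => (qp q n)⁻¹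

/-- Jackson's big `q`-exponential `∑ q^(n(n-1)/2) Xⁿ / (q;q)ₙ = (-X;q)_∞`. -/
noncomputable def bigQExp (q : ℂ) : ℂ⟦X⟧ := mk fun n => q ^ n.choose 2 / qp q n

lemma one_sub_X_mul_smallQExp (hq : ¬IsOfFinOrder q) :
    (1 - X) * smallQExp q = rescale q (smallQExp q) := by
  ext n
  rcases n with _ | n
  · rw [sub_mul, one_mul, map_sub, coeff_zero_X_mul, sub_zero, coeff_rescale, pow_zero, one_mul]
  · have hqp := qp_ne_zero hq n
    have hqp' := one_sub_pow_succ_ne_zero hq n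
    simp only [sub_mul, one_mul, map_sub, coeff_succ_X_mul, coeff_rescale, smallQExp, coeff_mk,
      qp_succ]
    field_simp
    ring

lemma coeff_succ_bigQExp (hq : ¬IsOfFinOrder q) (n : ℕ) :
    coeff (n + 1) (bigQExp q) = q ^ n / (1 - q ^ (n + 1)) * coeff n (bigQExp q) := by
  have hqp := qp_ne_zero hq n
  simp only [bigQExp, coeff_mk, qp_succ, Nat.choose_succ_succ' n 1, Nat.choose_one_right, pow_add]
  field_simp

lemma one_add_X_mul_rescale_bigQExp (hq : ¬IsOfFinOrder q) :
    (1 + X) * rescale q (bigQExp q) = bigQExp q := by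
  ext n
  rcases n with _ | n
  · rw [add_mul, one_mul, map_add, coeff_zero_X_mul, add_zero, coeff_rescale, pow_zero, one_mul]
  · have hn := one_sub_pow_succ_ne_zero hq n
    simp only [add_mul, one_mul, map_add, coeff_succ_X_mul, coeff_rescale, coeff_succ_bigQExp hq]
    field_simp
    ring

lemma summable_coeff_bigQExp (hp : ‖q‖ < 1) (x : ℂ) :
    Summable fun n => coeff n (bigQExp q) * x ^ n := by
  have hratio (n : ℕ) : coeff (n + 1) (bigQExp q) * x ^ (n + 1) =
      q ^ n / (1 - q ^ (n + 1)) * x * (coeff n (bigQExp q) * x ^ n) := by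
    rw [coeff_succ_bigQExp (not_isOfFinOrder_of_norm_lt_one hp)]
    ring
  have hpow := tendsto_pow_atTop_nhds_zero_of_norm_lt_one hp
  have hlim : Filter.Tendsto (fun n : ℕ => ‖q ^ n / (1 - q ^ (n + 1)) * x‖) Filter.atTop
      (nhds 0) := by
    have hden := (hpow.comp (Filter.tendsto_add_atTop_nat 1)).const_sub 1
    simpa using ((hpow.div hden (by simp)).mul_const x).norm
  refine summable_of_ratio_norm_eventually_le (r := 1 / 2) (by norm_num) ?_
  filter_upwards [hlim.eventually_le_const (show (0 : ℝ) < 1 / 2 by norm_num)] with n hn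
  rw [hratio, norm_mul]
  gcongr

lemma tsum_coeff_bigQExp (hp : ‖q‖ < 1) (x : ℂ) :
    ∑' n, coeff n (bigQExp q) * x ^ n = (1 + x) * ∑' n, coeff n (bigQExp q) * (q * x) ^ n := by
  have hlin : HasSum (fun n => coeff n (1 + X : ℂ⟦X⟧) * x ^ n) (1 + x) := by
    have hone := hasSum_ite_eq (0 : ℕ) (1 : ℂ)
    have hX := hasSum_ite_eq (1 : ℕ) x
    convert hone.add hX using 2 with n
    rcases n with _ | _ | n <;> simp [coeff_one, coeff_X]
  have hresc : HasSum (fun n => coeff n (rescale q (bigQExp q)) * x ^ n)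
      (∑' n, coeff n (bigQExp q) * (q * x) ^ n) := by
    convert (summable_coeff_bigQExp hp (q * x)).hasSum using 2 with n
    rw [coeff_rescale]
    ring
  have hmul := hasSum_coeff_mul hlin hresc
  rw [one_add_X_mul_rescale_bigQExp (not_isOfFinOrder_of_norm_lt_one hp)] at hmul
  exact hmul.tsum_eq

lemma hasSum_coeff_bigQExp (hp : ‖q‖ < 1) (x : ℂ) :
    HasSum (fun n => coeff n (bigQExp q) * x ^ n) (∏' k : ℕ, (1 + x * q ^ k)) := by
  have hsum := summable_coeff_bigQExp hp x
  have hiter (n : ℕ) : (∏ k ∈ range n, (1 + x * q ^ k)) *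
      ∑' m, coeff m (bigQExp q) * (q ^ n * x) ^ m = ∑' m, coeff m (bigQExp q) * x ^ m := by
    induction n with
    | zero => simp
    | succ n ih =>
      rw [← ih, tsum_coeff_bigQExp hp (q ^ n * x), prod_range_succ, ← mul_assoc q, ← pow_succ']
      ring
  have hmult : Multipliable fun k : ℕ => 1 + x * q ^ k := by
    refine multipliable_one_add_of_summable ?_
    simpa using (summable_geometric_of_lt_one (norm_nonneg q) hp).mul_left ‖x‖
  have hlim := hmult.tendsto_prod_tprod_nat.mul (tendsto_tsum_coeff_mul_pow hp hsum)
  simp only [hiter] at hlim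
  have heq := tendsto_nhds_unique tendsto_const_nhds hlim
  have hconst : constantCoeff (bigQExp q) = 1 := by
    simp [← coeff_zero_eq_constantCoeff_apply, bigQExp, qp_zero]
  rw [hconst, mul_one] at heq
  exact heq ▸ hsum.hasSum

/-- The Taylor series of `(-X²; q²)_∞`. -/
noncomputable def prefactorSeries (q : ℂ) : ℂ⟦X⟧ := expand 2 two_ne_zero (bigQExp (q ^ 2))

lemma one_add_X_sq_mul_rescale_prefactorSeries (hq : ¬IsOfFinOrder q) :
    (1 + X ^ 2) * rescale q (prefactorSeries q) = prefactorSeries q := by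
  have hq2 : ¬IsOfFinOrder (q ^ 2) := by simpa [isOfFinOrder_pow] using hq
  have h := congrArg (expand 2 two_ne_zero) (one_add_X_mul_rescale_bigQExp hq2)
  rwa [map_mul, map_add, map_one, expand_X, ← rescale_expand] at h

lemma hasSum_coeff_prefactorSeries (hq : ‖q‖ < 1) (t : ℂ) :
    HasSum (fun n => coeff n (prefactorSeries q) * t ^ n)
      (∏' k : ℕ, (1 + t ^ 2 * q ^ (2 * k))) := by
  have hq2 : ‖q ^ 2‖ < 1 := by
    rw [norm_pow]
    exact pow_lt_one₀ (norm_nonneg q) hq two_ne_zero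
  simpa only [prefactorSeries, ← pow_mul] using
    hasSum_coeff_expand two_ne_zero (hasSum_coeff_bigQExp hq2 (t ^ 2))

end QExponentials

section QDifferenceEquation

/-- The second-order `q`-difference equation, with `w = (z + z⁻¹)²`, that both sides of the
generating relation satisfy as power series in `X = b / 2`. -/
def IsGeneratingSolution (q w : ℂ) (F : ℂ⟦X⟧) : Prop :=
  C q * F - (C (q + 1) + C (q ^ 2 * (2 - w)) * X ^ 2) * rescale q F +
    (1 + C (q ^ 2) * X ^ 2) * (1 + C (q ^ 3) * X ^ 2) * rescale (q ^ 2) F = 0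

lemma IsGeneratingSolution.eq_of_coeff_eq {q w : ℂ} {F G : ℂ⟦X⟧} (hq : ¬IsOfFinOrder q)
    (hq0 : q ≠ 0)
    (hF : IsGeneratingSolution q w F) (hG : IsGeneratingSolution q w G)
    (h0 : coeff 0 F = coeff 0 G) (h1 : coeff 1 F = coeff 1 G) : F = G := by
  rw [IsGeneratingSolution] at hF hG
  rw [← sub_eq_zero]
  refine eq_zero_of_qDifference_eq (q := q) (N := 2) (A₀ := C q)
    (A₁ := -(C (q + 1) + C (q ^ 2 * (2 - w)) * X ^ 2))
    (A₂ := (1 + C (q ^ 2) * X ^ 2) * (1 + C (q ^ 3) * X ^ 2)) ?_ (fun n hn => ?_) (fun n hn => ?_)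
  · simp only [map_sub]
    linear_combination hF - hG
  · obtain ⟨m, rfl⟩ := Nat.exists_eq_add_of_le' hn
    have hfactor := mul_ne_zero (mul_ne_zero hq0 (one_sub_pow_succ_ne_zero hq m))
      (one_sub_pow_succ_ne_zero hq (m + 1))
    convert hfactor using 1
    simp only [constantCoeff_C, map_add, map_one, map_mul, map_pow, map_sub, neg_add_rev, map_neg,
      constantCoeff_X, ne_eq, OfNat.ofNat_ne_zero, not_false_eq_true, zero_pow, mul_zero, neg_zero,
      zero_add, add_zero, mul_one, one_mul]
    ring
  · interval_cases n <;> simp [h0, h1, -coeff_zero_eq_constantCoeff]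

end QDifferenceEquation

section PsiSeries

variable {s z : ℂ}

lemma qpg_add_two (hs : s ≠ 0) (c : ℂ) (n : ℕ) :
    qpg (c * s ^ (2 - 2 * ((n + 2 : ℕ) : ℤ))) (s ^ 4) (n + 2) =
      (1 - c * (s ^ (2 * n + 2))⁻¹) * (1 - c * s ^ (2 * n + 2)) *
        qpg (c * s ^ (2 - 2 * (n : ℤ))) (s ^ 4) n := by
  have hfirst : s ^ (2 - 2 * ((n + 2 : ℕ) : ℤ)) = (s ^ (2 * n + 2))⁻¹ := by
    rw [← zpow_natCast, ← zpow_neg]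
    lia
  have hlast : s ^ (2 - 2 * (n : ℤ)) = (s ^ (2 * n + 2))⁻¹ * s ^ 4 := by
    rw [← zpow_natCast, ← zpow_neg, ← zpow_natCast s 4, ← zpow_add₀ hs]
    congr 1
    lia
  have hshift (k : ℕ) : 1 - c * (s ^ (2 * n + 2))⁻¹ * (s ^ 4) ^ (k + 1) =
      1 - c * ((s ^ (2 * n + 2))⁻¹ * s ^ 4) * (s ^ 4) ^ k := by ring
  have htop : c * (s ^ (2 * n + 2))⁻¹ * (s ^ 4) ^ (n + 1) = c * s ^ (2 * n + 2) := by
    field_simp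
    ring
  rw [hfirst, hlast, qpg, qpg, prod_range_succ, prod_range_succ', htop]
  simp only [hshift]
  ring

lemma psi4_add_two (hs : s ≠ 0) (hz : z ≠ 0) (a : ℂ) (n : ℕ) :
    psi4 a s (n + 2) z =
      (1 - a * (z + z⁻¹) * (s ^ (2 * n + 2))⁻¹ + (a * (s ^ (2 * n + 2))⁻¹) ^ 2) *
        (1 - a * (z + z⁻¹) * s ^ (2 * n + 2) + (a * s ^ (2 * n + 2)) ^ 2) * psi4 a s n z := by
  simp only [psi4, mul_right_comm a _ z, mul_right_comm a _ z⁻¹, qpg_add_two hs]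
  field_simp
  ring

lemma psi4_neg_I_add_two (hs : s ≠ 0) (hz : z ≠ 0) (n : ℕ) :
    (s ^ 4) ^ (n + 1) * psi4 (-I) s (n + 2) z =
      -((1 - (s ^ 4) ^ (n + 1)) ^ 2 + (z + z⁻¹) ^ 2 * (s ^ 4) ^ (n + 1)) * psi4 (-I) s n z := by
  have hsq : (s ^ 4) ^ (n + 1) = (s ^ (2 * n + 2)) ^ 2 := by ring
  have hne : s ^ (2 * n + 2) ≠ 0 := pow_ne_zero _ hs
  rw [psi4_add_two hs hz, hsq]
  generalize s ^ (2 * n + 2) = T at hne ⊢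
  generalize z + z⁻¹ = y
  field_simp
  ring_nf
  simp only [I_sq, I_pow_three, I_pow_four]
  ring

/-- The power series in `b` whose sum is `qExpE a b s z`. -/
noncomputable def qExpSeries (a s z : ℂ) : ℂ⟦X⟧ :=
  mk fun n => s ^ (n ^ 2) * psi4 a s n z / qp (s ^ 4) n

lemma coeff_add_two_qExpSeries (hs : s ≠ 0) (hq : ¬IsOfFinOrder (s ^ 4)) (hz : z ≠ 0) (n : ℕ) :
    (1 - (s ^ 4) ^ (n + 1)) * (1 - (s ^ 4) ^ (n + 2)) * coeff (n + 2) (qExpSeries (-I) s z) =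
      -((1 - (s ^ 4) ^ (n + 1)) ^ 2 + (z + z⁻¹) ^ 2 * (s ^ 4) ^ (n + 1)) *
        coeff n (qExpSeries (-I) s z) := by
  have hpsi := psi4_neg_I_add_two hs hz n
  have h1 := one_sub_pow_succ_ne_zero hq n
  have h2 := one_sub_pow_succ_ne_zero hq (n + 1)
  have hqp := qp_ne_zero hq n
  have hpow : s ^ ((n + 2) ^ 2) = s ^ (n ^ 2) * (s ^ 4) ^ (n + 1) := by ring
  simp only [qExpSeries, coeff_mk, qp_succ, hpow]
  generalize z + z⁻¹ = y at hpsi ⊢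
  field_simp
  linear_combination hpsi

lemma qExpSeries_qDifference_eq (hs : s ≠ 0) (hq : ¬IsOfFinOrder (s ^ 4)) (hz : z ≠ 0) :
    C (s ^ 4) * (1 + X ^ 2) * qExpSeries (-I) s z -
      (C (s ^ 4 + 1) + C ((s ^ 4) ^ 2 * (2 - (z + z⁻¹) ^ 2)) * X ^ 2) *
        rescale (s ^ 4) (qExpSeries (-I) s z) +
      (1 + C ((s ^ 4) ^ 3) * X ^ 2) * rescale ((s ^ 4) ^ 2) (qExpSeries (-I) s z) = 0 := by
  ext n
  simp only [mul_add, add_mul, one_mul, mul_one, mul_assoc, map_add, map_sub, map_zero,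
    coeff_C_mul, coeff_X_pow_mul', coeff_rescale]
  rcases n with _ | _ | n
  · simp
  · simp only [zero_add, Nat.not_ofNat_le_one, ↓reduceIte, mul_zero, add_zero, pow_one,
      sub_add_cancel_right]
    ring
  · have hrec := coeff_add_two_qExpSeries hs hq hz n
    simp only [le_add_iff_nonneg_left, zero_le, ↓reduceIte, Nat.reduceSubDiff]
    linear_combination s ^ 4 * hrec

lemma isGeneratingSolution_prefactorSeries_mul_qExpSeries (hs : s ≠ 0)
    (hq : ¬IsOfFinOrder (s ^ 4)) (hz : z ≠ 0) :
    IsGeneratingSolution (s ^ 4) ((z + z⁻¹) ^ 2)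
      (prefactorSeries (s ^ 4) * qExpSeries (-I) s z) := by
  have hE := qExpSeries_qDifference_eq hs hq hz
  have hP := one_add_X_sq_mul_rescale_prefactorSeries hq
  have hP' := congrArg (rescale (s ^ 4)) hP
  rw [map_mul, map_add, map_one, map_pow, rescale_X, ← rescale_sq] at hP'
  rw [IsGeneratingSolution, map_mul, map_mul]
  simp only [map_mul, map_add, map_pow, map_one, map_sub] at hE hP' ⊢
  linear_combination rescale (s ^ 4) (prefactorSeries (s ^ 4)) * hE -
    C s ^ 4 * qExpSeries (-I) s z * hP +
    (1 + C s ^ 12 * X ^ 2) * rescale ((s ^ 4) ^ 2) (qExpSeries (-I) s z) * hP'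

end PsiSeries

section HermiteSeries

variable {q s z : ℂ}

/-- The generating function `∑ H_n(x|q) Xⁿ / (q;q)_n`. -/
noncomputable def qHermiteSeries (q z : ℂ) : ℂ⟦X⟧ := mk fun n => Hq q n z / qp q n

lemma qHermiteSeries_eq_mul (hq : ¬IsOfFinOrder q) (hz : z ≠ 0) :
    qHermiteSeries q z = rescale z⁻¹ (smallQExp q) * rescale z (smallQExp q) := by
  ext n
  rw [qHermiteSeries, coeff_mk, Hq, coeff_mul, Nat.sum_antidiagonal_eq_sum_range_succ_mk, sum_div]
  refine sum_congr rfl fun k hk => ?_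
  have hk' : k ≤ n := mem_range_succ_iff.mp hk
  have hqp := qp_ne_zero hq n
  have hpow : z ^ ((n : ℤ) - 2 * k) = z⁻¹ ^ k * z ^ (n - k) := by
    rw [inv_pow, ← zpow_natCast z k, ← zpow_natCast z (n - k), ← zpow_neg, ← zpow_add₀ hz]
    congr 1
    push_cast [hk']
    ring
  simp only [coeff_rescale, smallQExp, coeff_mk, hpow]
  field_simp

lemma one_sub_C_mul_X_mul_rescale_smallQExp (hq : ¬IsOfFinOrder q) (z : ℂ) :
    (1 - C z * X) * rescale z (smallQExp q) = rescale q (rescale z (smallQExp q)) := by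
  have h := congrArg (rescale z) (one_sub_X_mul_smallQExp hq)
  rwa [map_mul, map_sub, map_one, rescale_X, rescale_rescale, mul_comm q, ← rescale_rescale] at h

lemma qHermiteSeries_qDifference_eq (hq : ¬IsOfFinOrder q) (hz : z ≠ 0) :
    (1 - C (z + z⁻¹) * X + X ^ 2) * qHermiteSeries q z = rescale q (qHermiteSeries q z) := by
  have hC : C z * C z⁻¹ = (1 : ℂ⟦X⟧) := by rw [← map_mul, mul_inv_cancel₀ hz, map_one]
  rw [qHermiteSeries_eq_mul hq hz, map_mul, ← one_sub_C_mul_X_mul_rescale_smallQExp hq z,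
    ← one_sub_C_mul_X_mul_rescale_smallQExp hq z⁻¹, map_add]
  linear_combination -X ^ 2 * rescale z⁻¹ (smallQExp q) * rescale z (smallQExp q) * hC

/-- The right-hand side of the generating relation as a power series in `X = b / 2`. -/
noncomputable def thetaHermiteSeries (s z : ℂ) : ℂ⟦X⟧ :=
  mk fun n => s ^ (n ^ 2) * I ^ n * coeff n (qHermiteSeries (s ^ 4) z)

lemma thetaHermiteSeries_qDifference_eq (hq : ¬IsOfFinOrder (s ^ 4)) (hz : z ≠ 0) :
    thetaHermiteSeries s z = (1 + C (s ^ 4) * X ^ 2) * rescale (s ^ 4) (thetaHermiteSeries s z) +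
      C (I * (z + z⁻¹) * s) * X * rescale (s ^ 2) (thetaHermiteSeries s z) := by
  have hH := qHermiteSeries_qDifference_eq hq hz
  ext n
  have hn := congrArg (coeff n) hH
  simp only [add_mul, sub_mul, one_mul, mul_assoc, map_add, map_sub,
    coeff_C_mul, coeff_X_pow_mul', coeff_rescale] at hn ⊢
  rcases n with _ | _ | n
  · simp
  · simp only [zero_add, coeff_succ_X_mul, coeff_zero_eq_constantCoeff, Nat.not_ofNat_le_one,
      ↓reduceIte, add_zero, pow_one, thetaHermiteSeries, coeff_mk, one_pow, mul_zero, coeff_rescale,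
      pow_zero, ne_eq, OfNat.ofNat_ne_zero, not_false_eq_true, zero_pow, mul_one, one_mul] at hn ⊢
    linear_combination s * I * hn
  · simp only [coeff_succ_X_mul, le_add_iff_nonneg_left, zero_le, ↓reduceIte, Nat.reduceSubDiff,
      thetaHermiteSeries, coeff_mk, coeff_rescale] at hn ⊢
    linear_combination s ^ (n + 2) ^ 2 * I ^ (n + 2) * hn -
      s ^ (n + 2) ^ 2 * I ^ n * coeff n (qHermiteSeries (s ^ 4) z) * I_sq

lemma isGeneratingSolution_thetaHermiteSeries (hq : ¬IsOfFinOrder (s ^ 4)) (hz : z ≠ 0) :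
    IsGeneratingSolution (s ^ 4) ((z + z⁻¹) ^ 2) (thetaHermiteSeries s z) := by
  have h := thetaHermiteSeries_qDifference_eq hq hz
  rw [IsGeneratingSolution]
  generalize thetaHermiteSeries s z = B at h ⊢
  generalize z + z⁻¹ = y at h ⊢
  have h₂ := congrArg (rescale (s ^ 2)) h
  have h₄ := congrArg (rescale (s ^ 4)) h
  have hI : C I ^ 2 = (-1 : ℂ⟦X⟧) := by rw [← map_pow, I_sq, map_neg, map_one]
  simp only [map_mul, map_add, map_sub, map_pow, map_one, map_ofNat, rescale_X, rescale_C,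
    rescale_rescale, ← pow_add, ← pow_mul, Nat.reduceAdd, Nat.reduceMul] at h h₂ h₄ ⊢
  -- `h₂` eliminates the terms in `rescale (s ^ 2) B` and `rescale (s ^ 6) B`.
  linear_combination C s ^ 4 * h + C s ^ 5 * C I * C y * X * h₂ - (1 + C s ^ 8 * X ^ 2) * h₄ +
    C s ^ 8 * C y ^ 2 * X ^ 2 * rescale (s ^ 4) B * hI

end HermiteSeries

section GeneratingRelation

variable {s z : ℂ}

lemma coeff_qExpSeries_mul_pow (a b s z : ℂ) (n : ℕ) :
    coeff n (qExpSeries a s z) * b ^ n = s ^ (n ^ 2) * psi4 a s n z * b ^ n / qp (s ^ 4) n := by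
  rw [qExpSeries, coeff_mk, div_mul_eq_mul_div]

lemma coeff_thetaHermiteSeries_mul_pow (b s z : ℂ) (n : ℕ) :
    coeff n (thetaHermiteSeries s z) * (b / 2) ^ n =
      s ^ (n ^ 2) / qp (s ^ 4) n * (I * b / 2) ^ n * Hq (s ^ 4) n z := by
  rw [thetaHermiteSeries, qHermiteSeries, coeff_mk, coeff_mk]
  ring

lemma psi4_neg_I_one (hz : z ≠ 0) (s : ℂ) : psi4 (-I) s 1 z = I * (z + z⁻¹) := by
  simp only [psi4, qpg, prod_range_one, Nat.cast_one, mul_one, sub_self, zpow_zero, pow_zero]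
  linear_combination I ^ 2 * mul_inv_cancel₀ hz + I_sq

lemma Hq_one {q : ℂ} (hq : 1 - q ≠ 0) (z : ℂ) : Hq q 1 z = z + z⁻¹ := by
  simp [Hq, qp, sum_range_succ, hq]

lemma coeff_one_prefactorSeries_mul (q : ℂ) (F : ℂ⟦X⟧) :
    coeff 1 (prefactorSeries q * F) = coeff 1 F := by
  simp [prefactorSeries, coeff_mul, Nat.antidiagonal_succ, coeff_expand, bigQExp, qp_zero]

theorem prefactorSeries_mul_qExpSeries (hs : s ≠ 0) (hq : ¬IsOfFinOrder (s ^ 4)) (hz : z ≠ 0) :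
    prefactorSeries (s ^ 4) * qExpSeries (-I) s z = thetaHermiteSeries s z := by
  have hq1 : 1 - s ^ 4 ≠ 0 := by simpa using one_sub_pow_succ_ne_zero hq 0
  refine (isGeneratingSolution_prefactorSeries_mul_qExpSeries hs hq hz).eq_of_coeff_eq hq
    (pow_ne_zero 4 hs) (isGeneratingSolution_thetaHermiteSeries hq hz) ?_ ?_
  · simp [prefactorSeries, bigQExp, qExpSeries, thetaHermiteSeries, qHermiteSeries, psi4, qpg, Hq,
      qp_zero]
  · rw [coeff_one_prefactorSeries_mul, qExpSeries, thetaHermiteSeries, qHermiteSeries, coeff_mk,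
      coeff_mk, coeff_mk, psi4_neg_I_one hz, Hq_one hq1]
    ring

theorem qHermite_generating_general (hs0 : s ≠ 0) (hs1 : ‖s‖ < 1) (hz : z ≠ 0) (b : ℂ)
    (hsum : Summable fun n : ℕ =>
      s ^ (n ^ 2) * psi4 (-I) s n z * (b / 2) ^ n / qp (s ^ 4) n) :
    HasSum (fun k : ℕ => s ^ (k ^ 2) / qp (s ^ 4) k * (I * b / 2) ^ k * Hq (s ^ 4) k z)
      ((∏' k : ℕ, (1 + b ^ 2 / 4 * (s ^ 4) ^ (2 * k))) * qExpE (-I) (b / 2) s z) := by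
  have hq : ‖s ^ 4‖ < 1 := by
    rw [norm_pow]
    exact pow_lt_one₀ (norm_nonneg s) hs1 four_ne_zero
  have hE : HasSum (fun n => coeff n (qExpSeries (-I) s z) * (b / 2) ^ n)
      (qExpE (-I) (b / 2) s z) := by
    simpa only [coeff_qExpSeries_mul_pow, qExpE] using hsum.hasSum
  have hprod := hasSum_coeff_mul (hasSum_coeff_prefactorSeries hq (b / 2)) hE
  rw [prefactorSeries_mul_qExpSeries hs0 (not_isOfFinOrder_of_norm_lt_one hq) hz] at hprod
  have hb : (b / 2) ^ 2 = b ^ 2 / 4 := by ring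
  simpa only [coeff_thetaHermiteSeries_mul_pow, hb] using hprod

end GeneratingRelation

end

/-- The generating relation
`(-b²/4; q²)_∞ E_q(x; -i, b/2) = ∑ₖ (q^{k²/4}/(q;q)ₖ)(ib/2)ᵏ H_k(x|q)`,
with `q = s⁴` and `x = cos θ`, `z = e^{iθ}`. -/
theorem qHermite_generating (q s : ℝ) (hq0 : 0 < q) (hq1 : q < 1) (hs : 0 < s)
    (hsq : s ^ 4 = q) (b : ℂ) (θ : ℝ)
    (hsum1 : Summable fun n : ℕ =>
      (s : ℂ) ^ (n ^ 2) * psi4 (-I) (s : ℂ) n (Complex.exp (θ * I)) * (b / 2) ^ n /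
        qp ((s : ℂ) ^ 4) n)
    (hsum2 : Summable fun k : ℕ =>
      (s : ℂ) ^ (k ^ 2) / qp (q : ℂ) k * (I * b / 2) ^ k * Hq (q : ℂ) k (Complex.exp (θ * I))) :
    (∏' k : ℕ, (1 + b ^ 2 / 4 * (q : ℂ) ^ (2 * k))) *
        qExpE (-I) (b / 2) (s : ℂ) (Complex.exp (θ * I)) =
      ∑' k : ℕ, (s : ℂ) ^ (k ^ 2) / qp (q : ℂ) k * (I * b / 2) ^ k *
        Hq (q : ℂ) k (Complex.exp (θ * I)) := by
  subst hsq
  have hs1 : ‖(s : ℂ)‖ < 1 := by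
    rw [norm_real, Real.norm_of_nonneg hs.le]
    exact (pow_lt_one_iff_of_nonneg hs.le four_ne_zero).mp hq1
  have h := qHermite_generating_general (ofReal_ne_zero.mpr hs.ne') hs1
    (Complex.exp_ne_zero (θ * I)) b hsum1
  simpa only [ofReal_pow] using h.tsum_eq.symm
end
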